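/- Let (R₁, R₀, g, res, tr) be a C₂-Green functor and let F(R) = (F₁, F₀, G, Res, Tr, N) be the C₂-Tambara functor with F₁ = {(n,x) ∈ R₁ × R₁ : res(n) = res(x)²}, F₀ = {(n,x) ∈ R₁ × R₀ : res(n) = x·g(x)}, coordinatewise multiplication, additions (n,x)+(n',x') = (n+n'+tr(res(x)·res(x')), x+x') on F₁ and (n,x)+(n',x') = (n+n'+tr(x·g(x')), x+x') on F₀, G(n,x) = (n, g(x)), Res(n,x) = (n, res(x)), Tr(n,x) = (2n + tr(x²), tr(x)), and N(n,x) = (n², n). Let (S₁, S₀, g_S, res_S, tr_S, N_S) be a C₂-Tambara functor and (φ₁, φ₀) a morphism of C₂-Green functors from its underlying C₂-Green functor to (R₁, R₀, g, res, tr). If ψ = (ψ₁, ψ₀) and ψ' = (ψ₁', ψ₀') are two morphisms of C₂-Tambara functors S → F(R) whose composites with the second-coordinate projections ε₁(n,x) = x, ε₀(n,x) = x both equal (φ₁, φ₀), then ψ = ψ'. -/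

import Mathlib

/-!
A lift is determined by its second coordinates. Compatibility with the norm,
`ψ₁ (N u) = ((ψ₀ u).1 ^ 2, (ψ₀ u).1)`, forces `(ψ₀ u).1 = φ₁ (N u)`. Compatibility with the
restriction then gives `(ψ₁ s).1 = (ψ₀ (res s)).1`. So both components are determined by
`φ₁` and `φ₀`.
-/

universe u v

structure C2Green : Type (u + 1) where
  R1 : Type u
  R0 : Type u
  [ring1 : CommRing R1]
  [ring0 : CommRing R0]
  g : R0 →+* R0
  res : R1 →+* R0
  tr : R0 →+ R1
  g_invol : ∀ x, g (g x) = x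
  g_res : ∀ a, g (res a) = res a
  tr_g : ∀ x, tr (g x) = tr x
  res_tr : ∀ x, res (tr x) = x + g x
  frob : ∀ a x, a * tr x = tr (res a * x)

attribute [instance] C2Green.ring1 C2Green.ring0

structure C2Tambara extends C2Green.{u} where
  N : R0 → R1
  N_one : N 1 = 1
  N_mul : ∀ x y, N (x * y) = N x * N y
  N_g : ∀ x, N (g x) = N x
  res_N : ∀ x, res (N x) = x * g x
  N_add : ∀ x y, N (x + y) = N x + N y + tr (x * g y)

section

variable {R₁ R₀ : Type v} [CommRing R₁] [CommRing R₀]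

/-- The twisted addition on `F₁`. -/
def F1add (res : R₁ →+* R₀) (tr : R₀ →+ R₁) (p q : R₁ × R₁) : R₁ × R₁ :=
  (p.1 + q.1 + tr (res p.2 * res q.2), p.2 + q.2)

/-- The twisted addition on `F₀`. -/
def F0add (g : R₀ →+* R₀) (tr : R₀ →+ R₁) (p q : R₁ × R₀) : R₁ × R₀ :=
  (p.1 + q.1 + tr (p.2 * g q.2), p.2 + q.2)

/-- The Weyl action `G` on `F₀`. -/
def Gmap (g : R₀ →+* R₀) (p : R₁ × R₀) : R₁ × R₀ := (p.1, g p.2)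

/-- The restriction `Res : F₁ → F₀`. -/
def Resmap (res : R₁ →+* R₀) (p : R₁ × R₁) : R₁ × R₀ := (p.1, res p.2)

/-- The transfer `Tr : F₀ → F₁`. -/
def Trmap (tr : R₀ →+ R₁) (p : R₁ × R₀) : R₁ × R₁ := (2 * p.1 + tr (p.2 ^ 2), tr p.2)

/-- The norm `N : F₀ → F₁`. -/
def Nmap (p : R₁ × R₀) : R₁ × R₁ := (p.1 ^ 2, p.1)

/-- `(ψ₁, ψ₀)` is a morphism of `C₂`-Tambara functors from `S` to
`F(R) = (F₁, F₀, G, Res, Tr, N)`: both components land in the defining subsets,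
are ring homomorphisms for the `F`-structures, and commute with the Weyl action,
restriction, transfer, and norm. -/
def IsTambaraMorphismToF (S : C2Tambara.{u})
    (g : R₀ →+* R₀) (res : R₁ →+* R₀) (tr : R₀ →+ R₁)
    (ψ₁ : S.R1 → R₁ × R₁) (ψ₀ : S.R0 → R₁ × R₀) : Prop :=
  (∀ s, res (ψ₁ s).1 = (res (ψ₁ s).2) ^ 2) ∧
  (∀ u, res (ψ₀ u).1 = (ψ₀ u).2 * g (ψ₀ u).2) ∧
  (ψ₁ 1 = (1, 1)) ∧
  (∀ s s', ψ₁ (s + s') = F1add res tr (ψ₁ s) (ψ₁ s')) ∧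
  (∀ s s', ψ₁ (s * s') = ((ψ₁ s).1 * (ψ₁ s').1, (ψ₁ s).2 * (ψ₁ s').2)) ∧
  (ψ₀ 1 = (1, 1)) ∧
  (∀ u u', ψ₀ (u + u') = F0add g tr (ψ₀ u) (ψ₀ u')) ∧
  (∀ u u', ψ₀ (u * u') = ((ψ₀ u).1 * (ψ₀ u').1, (ψ₀ u).2 * (ψ₀ u').2)) ∧
  (∀ u, ψ₀ (S.g u) = Gmap g (ψ₀ u)) ∧
  (∀ s, ψ₀ (S.res s) = Resmap res (ψ₁ s)) ∧
  (∀ u, ψ₁ (S.tr u) = Trmap tr (ψ₀ u)) ∧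
  (∀ u, ψ₁ (S.N u) = Nmap (ψ₀ u))

end

/-- Given a `C₂`-Green functor `(R₁, R₀, g, res, tr)`, a `C₂`-Tambara functor `S`, and a
morphism `(φ₁, φ₀)` of `C₂`-Green functors from the underlying Green functor of `S` to
`R`, any two morphisms of `C₂`-Tambara functors `S → F(R)` whose composites with the
second-coordinate projections equal `(φ₁, φ₀)` coincide. -/
theorem lift_unique {R₁ R₀ : Type v} [CommRing R₁] [CommRing R₀]
    (g : R₀ →+* R₀) (res : R₁ →+* R₀) (tr : R₀ →+ R₁)
    (g_invol : ∀ x, g (g x) = x)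
    (g_res : ∀ a, g (res a) = res a)
    (tr_g : ∀ x, tr (g x) = tr x)
    (res_tr : ∀ x, res (tr x) = x + g x)
    (frob : ∀ a x, a * tr x = tr (res a * x))
    (S : C2Tambara.{u})
    (φ₁ : S.R1 →+* R₁) (φ₀ : S.R0 →+* R₀)
    (φ_g : ∀ u, φ₀ (S.g u) = g (φ₀ u))
    (φ_res : ∀ s, φ₀ (S.res s) = res (φ₁ s))
    (φ_tr : ∀ u, φ₁ (S.tr u) = tr (φ₀ u))
    (ψ₁ ψ₁' : S.R1 → R₁ × R₁) (ψ₀ ψ₀' : S.R0 → R₁ × R₀)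
    (hψ : IsTambaraMorphismToF S g res tr ψ₁ ψ₀)
    (hψ' : IsTambaraMorphismToF S g res tr ψ₁' ψ₀')
    (hproj1 : ∀ s, (ψ₁ s).2 = φ₁ s) (hproj0 : ∀ u, (ψ₀ u).2 = φ₀ u)
    (hproj1' : ∀ s, (ψ₁' s).2 = φ₁ s) (hproj0' : ∀ u, (ψ₀' u).2 = φ₀ u) :
    ψ₁ = ψ₁' ∧ ψ₀ = ψ₀' := by
  obtain ⟨-, -, -, -, -, -, -, -, -, hres, -, hN⟩ := hψ
  obtain ⟨-, -, -, -, -, -, -, -, -, hres', -, hN'⟩ := hψ'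
  -- Compatibility with the norm: the second coordinate of `ψ₁ (N u)` is `(ψ₀ u).1`.
  have key : ∀ u, (ψ₀ u).1 = φ₁ (S.N u) := fun u => by rw [← hproj1, hN]; rfl
  have key' : ∀ u, (ψ₀' u).1 = φ₁ (S.N u) := fun u => by rw [← hproj1', hN']; rfl
  have h₀ : ψ₀ = ψ₀' := funext fun u =>
    Prod.ext ((key u).trans (key' u).symm) ((hproj0 u).trans (hproj0' u).symm)
  refine ⟨funext fun s => Prod.ext ?_ ((hproj1 s).trans (hproj1' s).symm), h₀⟩
  -- Compatibility with the restriction, which preserves first coordinates.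
  have h : Resmap res (ψ₁ s) = Resmap res (ψ₁' s) := by rw [← hres, ← hres', h₀]
  have h1 := congrArg Prod.fst h
  exact h1
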